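/- There exists ϑ ∈ (0,1), depending only on λ and A*, such that for every L > 0 there is a constant C > 0 (depending only on L, λ, A*) with the following property: for every z ∈ 𝕊, every function g : 𝕊 → ℝ that is Lipschitz on J_z with constant L and satisfies ∫ g d𝔪 = 0, and every sequence (T_i)_{i≥1} ⊂ 𝓜 with transfer operators ℒ_i, one has ‖ℒ_k ⋯ ℒ_1 g‖_{L¹(𝔪)} ≤ C ϑ^k for all k ≥ 0. -/

import Mathlib

open MeasureTheory Filter Topology Set UniformConvergence

noncomputable section

instance : Fact ((0:ℝ) < 1) := ⟨zero_lt_one⟩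

/-- The circle `𝕊 = ℝ/ℤ`. -/
abbrev Circle1 : Type := AddCircle (1 : ℝ)

/-- A `C²` expanding circle map with expansion `≥ lam` and `‖T''‖_∞ ≤ Astar`,
encoded by a lift `F : ℝ → ℝ` satisfying `F (x+1) = F x + deg`. -/
structure CM (lam Astar : ℝ) where
  F : ℝ → ℝ
  deg : ℤ
  lift_add_one : ∀ x : ℝ, F (x + 1) = F x + deg
  contDiff : ContDiff ℝ 2 F
  expanding : ∀ x : ℝ, lam ≤ deriv F x
  second_bound : ∀ x : ℝ, |deriv (deriv F) x| ≤ Astar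

namespace CM

variable {lam Astar : ℝ}

/-- The induced map on the circle. -/
def toMap (T : CM lam Astar) : Circle1 → Circle1 :=
  fun x => (↑(T.F ((AddCircle.equivIco 1 0 x : ℝ))) : Circle1)

/-- The derivative of `T`, as a function on the circle. -/
def dmap (T : CM lam Astar) : Circle1 → ℝ :=
  fun x => deriv T.F ((AddCircle.equivIco 1 0 x : ℝ))

end CM

/-- The `C¹` distance on the space of maps. -/
def dC1 {lam Astar : ℝ} (T₁ T₂ : CM lam Astar) : ℝ :=
  (⨆ x : Circle1, dist (T₁.toMap x) (T₂.toMap x)) + (⨆ x : Circle1, |T₁.dmap x - T₂.dmap x|)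

/-- The transfer operator `ℒ_T h (x) = ∑_{T y = x} h y / T' y`. -/
def transfer {lam Astar : ℝ} (T : CM lam Astar) (h : Circle1 → ℝ) : Circle1 → ℝ :=
  fun x => ∑' y : {y : Circle1 // T.toMap y = x}, h y / T.dmap y

/-- Iterated transfer operators `ℒ_k ⋯ ℒ_1` of the sequence `T_1, T_2, …` (`Ts i = T_i`). -/
def transferIter {lam Astar : ℝ} (Ts : ℕ → CM lam Astar) : ℕ → (Circle1 → ℝ) → (Circle1 → ℝ)
  | 0, h => h
  | (k+1), h => transfer (Ts (k+1)) (transferIter Ts k h)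

/-- Composition `T_k ∘ ⋯ ∘ T_1` as circle maps. -/
def mapIter {lam Astar : ℝ} (Ts : ℕ → CM lam Astar) : ℕ → Circle1 → Circle1
  | 0 => id
  | (k+1) => (Ts (k+1)).toMap ∘ mapIter Ts k

/-- Composition of the lifts `F_k ∘ ⋯ ∘ F_1`. -/
def liftIter {lam Astar : ℝ} (Ts : ℕ → CM lam Astar) : ℕ → ℝ → ℝ
  | 0 => id
  | (k+1) => (Ts (k+1)).F ∘ liftIter Ts k

/-- A real representative of `z`. -/
def zrep (z : Circle1) : ℝ := (AddCircle.equivIco 1 0 z : ℝ)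

/-- The coordinate on the cut circle `J_z = 𝕊 ∖ {z}`. -/
def arcCoord (z x : Circle1) : ℝ := ((AddCircle.equivIoc 1 (zrep z) x : ℝ))

/-- `|x − y|_z`: the length of the subarc of `J_z` connecting `x` and `y`. -/
def arcDist (z x y : Circle1) : ℝ := |arcCoord z x - arcCoord z y|

/-- `g` is Lipschitz on `J_z = 𝕊 ∖ {z}` with constant `L`. -/
def LipOnArc (z : Circle1) (L : ℝ) (g : Circle1 → ℝ) : Prop :=
  ∀ x y : Circle1, x ≠ z → y ≠ z → |g x - g y| ≤ L * arcDist z x y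

/-- A probability density w.r.t. the Haar–Lebesgue measure `𝔪` on the circle. -/
def IsProbDensity (ψ : Circle1 → ℝ) : Prop :=
  Integrable ψ volume ∧ (∫ x : Circle1, ψ x) = 1 ∧ ∀ x, 0 ≤ ψ x

/-- The class `𝒟_L`: positive probability densities whose logarithm is Lipschitz
with constant `L` on `J_z` for some `z`. -/
def memD (L : ℝ) (ψ : Circle1 → ℝ) : Prop :=
  IsProbDensity ψ ∧ (∀ x, 0 < ψ x) ∧ ∃ z : Circle1, LipOnArc z L (fun x => Real.log (ψ x))

/-- The `L¹(𝔪)` norm. -/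
def l1norm (h : Circle1 → ℝ) : ℝ := ∫ x : Circle1, |h x|

/-- The supremum norm. -/
def supNorm (h : Circle1 → ℝ) : ℝ := ⨆ x : Circle1, |h x|

/-- The Lipschitz constant of `h` (w.r.t. the metric of the circle). -/
def lipConst (h : Circle1 → ℝ) : ℝ :=
  sInf {L : ℝ | 0 ≤ L ∧ ∀ x y : Circle1, |h x - h y| ≤ L * dist x y}

/-- The Lipschitz norm `‖h‖_Lip = Lip(h) + ‖h‖_∞`. -/
def lipNorm (h : Circle1 → ℝ) : ℝ := lipConst h + supNorm h

/-- `ρ` is the density of the SRB measure of `T`: the density of a `T`-invariant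
probability measure equivalent to `𝔪`. -/
def IsSRBDensity {lam Astar : ℝ} (T : CM lam Astar) (ρ : Circle1 → ℝ) : Prop :=
  IsProbDensity ρ ∧ (∀ᵐ x : Circle1, 0 < ρ x) ∧
    Measure.map T.toMap (volume.withDensity (fun x => ENNReal.ofReal (ρ x))) =
      volume.withDensity (fun x => ENNReal.ofReal (ρ x))

section QDS

variable {lam Astar : ℝ}

/-- `x_{n,k} = T_{n,k} ∘ ⋯ ∘ T_{n,1}` for a triangular array. -/
def arrIter (Tarr : ℕ → ℕ → CM lam Astar) (n : ℕ) : ℕ → Circle1 → Circle1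
  | 0 => id
  | (k+1) => (Tarr n (k+1)).toMap ∘ arrIter Tarr n k

/-- `ℒ_{n,k} ⋯ ℒ_{n,1}` for a triangular array. -/
def arrTransfer (Tarr : ℕ → ℕ → CM lam Astar) (n : ℕ) : ℕ → (Circle1 → ℝ) → (Circle1 → ℝ)
  | 0, h => h
  | (k+1), h => transfer (Tarr n (k+1)) (arrTransfer Tarr n k h)

/-- `f_{n,k} = f ∘ T_{n,k} ∘ ⋯ ∘ T_{n,1}` evaluated at `x`. -/
def fnk (Tarr : ℕ → ℕ → CM lam Astar) (f : Circle1 → ℝ) (n k : ℕ) (x : Circle1) : ℝ :=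
  f (arrIter Tarr n k x)

/-- `ζₙ(x,t) = n⁻¹ (∑_{k<⌊nt⌋} f_{n,k}(x) + {nt}·f_{n,⌊nt⌋}(x))`. -/
def zetaP (Tarr : ℕ → ℕ → CM lam Astar) (f : Circle1 → ℝ) (n : ℕ) (x : Circle1) (t : ℝ) : ℝ :=
  (n : ℝ)⁻¹ * ((∑ k ∈ Finset.range ⌊(n : ℝ) * t⌋₊, fnk Tarr f n k x) +
    Int.fract ((n : ℝ) * t) * fnk Tarr f n ⌊(n : ℝ) * t⌋₊ x)

/-- `ξₙ(x,t) = √n ζₙ(x,t) − √n μ(ζₙ(·,t))` for a measure `μ`. -/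
def xiP (Tarr : ℕ → ℕ → CM lam Astar) (f : Circle1 → ℝ) (μ : Measure Circle1) (n : ℕ)
    (x : Circle1) (t : ℝ) : ℝ :=
  Real.sqrt n * zetaP Tarr f n x t - Real.sqrt n * ∫ y, zetaP Tarr f n y t ∂μ

/-- The Hölder continuity (exponent `η`) of the curve `γ` on `[0,1]`, w.r.t. `d_{C¹}`. -/
def HolderCurve (η : ℝ) (γ : ℝ → CM lam Astar) : Prop :=
  ∃ H : ℝ, ∀ s ∈ Icc (0:ℝ) 1, ∀ t ∈ Icc (0:ℝ) 1, dC1 (γ s) (γ t) ≤ H * |s - t| ^ η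

/-- The convergence-rate condition `sup_n n^η sup_t d_{C¹}(T_{n,⌊nt⌋}, γ_t) < ∞`. -/
def ArrayApprox (η : ℝ) (γ : ℝ → CM lam Astar) (Tarr : ℕ → ℕ → CM lam Astar) : Prop :=
  ∃ M : ℝ, ∀ n : ℕ, 1 ≤ n → ∀ t ∈ Icc (0:ℝ) 1,
    (n : ℝ) ^ η * dC1 (Tarr n ⌊(n : ℝ) * t⌋₊) (γ t) ≤ M

end QDS

/-- The path space: functions `[0,1] → ℝ` with the topology of uniform convergence;
continuous paths (with the supremum metric) embed isometrically. -/
abbrev PathSpace : Type := (Icc (0:ℝ) 1) →ᵤ ℝ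

instance : MeasurableSpace PathSpace := borel PathSpace

/-- A function `[0,1] → ℝ` (given as a function on `ℝ`) as a point of the path space. -/
def pathOf (g : ℝ → ℝ) : PathSpace := UniformFun.ofFun (fun t => g t)

/-- Evaluation of a path at time `t` (clamped to `[0,1]`). -/
def evalPath (t : ℝ) (ω : PathSpace) : ℝ := UniformFun.toFun ω (projIcc 0 1 zero_le_one t)


section Extra

variable {lam Astar : ℝ}

/-- `μ(ζₙ(·,t))` for the measure with density `ρ` w.r.t. `𝔪`. -/
def zetaMean (Tarr : ℕ → ℕ → CM lam Astar) (f : Circle1 → ℝ) (ρ : Circle1 → ℝ)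
    (n : ℕ) (t : ℝ) : ℝ :=
  ∫ y : Circle1, zetaP Tarr f n y t * ρ y

/-- `𝔪(ζₙ(·,t))`, the mean w.r.t. the Lebesgue measure. -/
def zetaMeanM (Tarr : ℕ → ℕ → CM lam Astar) (f : Circle1 → ℝ) (n : ℕ) (t : ℝ) : ℝ :=
  ∫ y : Circle1, zetaP Tarr f n y t

/-- `ξₙ(x,t) = √n ζₙ(x,t) − √n μ(ζₙ(·,t))`, where `μ` has density `ρ`. -/
def xiD (Tarr : ℕ → ℕ → CM lam Astar) (f : Circle1 → ℝ) (ρ : Circle1 → ℝ)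
    (n : ℕ) (x : Circle1) (t : ℝ) : ℝ :=
  Real.sqrt n * zetaP Tarr f n x t - Real.sqrt n * zetaMean Tarr f ρ n t

end Extra

/-- The σ-algebra `𝔉_t` on the path space, generated by the evaluations at times `s ∈ [0,t]`. -/
def pathFiltration (t : ℝ) : MeasurableSpace PathSpace :=
  ⨆ (s : ℝ) (_ : 0 ≤ s ∧ s ≤ t), MeasurableSpace.comap (evalPath s) (borel ℝ)

/-- The process `M_t(ω) = A(ω(t)) − A(ω(0)) − ½∫₀ᵗ σ̂ₛ²·A''(ω(s)) ds`. -/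
def MGproc (σ2 : ℝ → ℝ) (A : ℝ → ℝ) (t : ℝ) (ω : PathSpace) : ℝ :=
  A (evalPath t ω) - A (evalPath 0 ω) -
    (1/2) * ∫ s in (0:ℝ)..t, σ2 s * deriv (deriv A) (evalPath s ω)

/-- `P` solves the martingale problem on `C⁰([0,1],ℝ)` for the generator `½σ̂ₜ² d²/dx²`,
started at `0`:  `P` is a probability measure, concentrated on continuous paths starting at `0`,
and for every `A ∈ C_c^∞(ℝ)` the process `MGproc σ2 A` is a `P`-martingale w.r.t. the
natural filtration `𝔉_t`.  -/
def SolvesMartingaleProblem (σ2 : ℝ → ℝ) (P : Measure PathSpace) : Prop :=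
  IsProbabilityMeasure P ∧
  P {ω : PathSpace | evalPath 0 ω = 0} = 1 ∧
  P {ω : PathSpace | Continuous (UniformFun.toFun ω)} = 1 ∧
  ∀ A : ℝ → ℝ, ContDiff ℝ (⊤ : ℕ∞) A → HasCompactSupport A →
    (∀ t ∈ Icc (0:ℝ) 1, Integrable (MGproc σ2 A t) P) ∧
    (∀ t ∈ Icc (0:ℝ) 1, @Measurable PathSpace ℝ (pathFiltration t) _ (MGproc σ2 A t)) ∧
    (∀ s ∈ Icc (0:ℝ) 1, ∀ t ∈ Icc (0:ℝ) 1, s ≤ t →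
      P[MGproc σ2 A t | pathFiltration s] =ᵐ[P] MGproc σ2 A s)

end

/-!
Call a nonnegative function `K`-log-Lipschitz if `f x ≤ exp (K |x - y|) f y`. On a circle cut at one
point such an `f` is bounded below by `exp (-K) ∫ f`, so it stays nonnegative after subtracting the
constant `c = ε exp (-K) ∫ f`, at the price of replacing `K` by `K / (1 - ε)`. A transfer operator
contracts logarithmic Lipschitz constants by `λ⁻¹` up to the distortion `A* / λ²`, so for suitable
`K` and `ε` it brings `f - c` back into the class of `K`-log-Lipschitz functions.

Two densities of equal mass hence lose the same constant at each step without leaving the class, and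
their difference decays like `(1 - ε exp (-K)) ^ k` in `L¹`. A mean-zero Lipschitz function becomes
such a difference after adding a large constant. The cut is carried along with the function: if `f`
is cut at `a`, then `ℒ_T f` is cut at `T a`.
-/

section LogLipOn

variable {α β ι : Type*} [PseudoMetricSpace α] [PseudoMetricSpace β]

/-- Nonnegative functions whose logarithm is `K`-Lipschitz on `s`. The multiplicative form admits
the zero function, so that subtracting a constant needs no strict positivity. -/
structure LogLipOn (K : ℝ) (f : α → ℝ) (s : Set α) : Prop where
  nonneg : ∀ x ∈ s, 0 ≤ f x
  le_exp_mul : ∀ x ∈ s, ∀ y ∈ s, f x ≤ Real.exp (K * dist x y) * f y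

namespace LogLipOn

variable {K K' : ℝ} {f g : α → ℝ} {s : Set α}

lemma mono (hf : LogLipOn K f s) (hKK' : K ≤ K') : LogLipOn K' f s where
  nonneg := hf.nonneg
  le_exp_mul x hx y hy := by
    have hy0 := hf.nonneg y hy
    refine (hf.le_exp_mul x hx y hy).trans ?_
    gcongr

lemma const {c : ℝ} (hK : 0 ≤ K) (hc : 0 ≤ c) : LogLipOn K (fun _ : α => c) s where
  nonneg _ _ := hc
  le_exp_mul _ _ _ _ := le_mul_of_one_le_left hc (Real.one_le_exp (by positivity))

lemma mul (hf : LogLipOn K f s) (hg : LogLipOn K' g s) :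
    LogLipOn (K + K') (fun x => f x * g x) s where
  nonneg x hx := mul_nonneg (hf.nonneg x hx) (hg.nonneg x hx)
  le_exp_mul x hx y hy := by
    calc f x * g x
        ≤ (Real.exp (K * dist x y) * f y) * (Real.exp (K' * dist x y) * g y) :=
          mul_le_mul (hf.le_exp_mul x hx y hy) (hg.le_exp_mul x hx y hy) (hg.nonneg x hx)
            (mul_nonneg (Real.exp_pos _).le (hf.nonneg y hy))
      _ = Real.exp ((K + K') * dist x y) * (f y * g y) := by
          rw [add_mul, Real.exp_add]
          ring

lemma inv (hf : LogLipOn K f s) : LogLipOn K (fun x => (f x)⁻¹) s where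
  nonneg x hx := inv_nonneg.2 (hf.nonneg x hx)
  le_exp_mul x hx y hy := by
    have hyx : f y ≤ Real.exp (K * dist x y) * f x := dist_comm y x ▸ hf.le_exp_mul y hy x hx
    rcases (hf.nonneg y hy).eq_or_lt' with hy0 | hy0
    · have hx0 : f x = 0 :=
        ((hf.le_exp_mul x hx y hy).trans_eq (by rw [hy0, mul_zero])).antisymm (hf.nonneg x hx)
      simp only [hx0, hy0, inv_zero, mul_zero, le_refl]
    · have hx0 : 0 < f x := pos_of_mul_pos_right (hy0.trans_le hyx) (Real.exp_pos _).le
      rw [← div_eq_mul_inv, le_div_iff₀ hy0, inv_mul_le_iff₀ hx0, mul_comm]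
      exact hyx

lemma sum {u : Finset ι} {F : ι → α → ℝ} (hF : ∀ i ∈ u, LogLipOn K (F i) s) :
    LogLipOn K (fun x => ∑ i ∈ u, F i x) s where
  nonneg x hx := Finset.sum_nonneg fun i hi => (hF i hi).nonneg x hx
  le_exp_mul x hx y hy := by
    rw [Finset.mul_sum]
    exact Finset.sum_le_sum fun i hi => (hF i hi).le_exp_mul x hx y hy

lemma comp {c : ℝ} {t : Set β} {φ : β → α} (hf : LogLipOn K f s) (hK : 0 ≤ K)
    (hφ : MapsTo φ t s) (hdist : ∀ x ∈ t, ∀ y ∈ t, dist (φ x) (φ y) ≤ c * dist x y) :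
    LogLipOn (K * c) (f ∘ φ) t where
  nonneg x hx := hf.nonneg _ (hφ hx)
  le_exp_mul x hx y hy := by
    refine (hf.le_exp_mul _ (hφ hx) _ (hφ hy)).trans ?_
    have hy0 := hf.nonneg _ (hφ hy)
    rw [mul_assoc, Function.comp_apply]
    gcongr
    exact hdist x hx y hy

lemma comp_isometry {t : Set β} {φ : β → α} (hf : LogLipOn K f s) (hφ : MapsTo φ t s)
    (hφi : Isometry φ) : LogLipOn K (f ∘ φ) t where
  nonneg _ hx := hf.nonneg _ (hφ hx)
  le_exp_mul x hx y hy := hφi.dist_eq x y ▸ hf.le_exp_mul _ (hφ hx) _ (hφ hy)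

lemma of_abs_sub_le {A c : ℝ} (hc : 0 < c) (hcf : ∀ x ∈ s, c ≤ f x)
    (hA : ∀ x ∈ s, ∀ y ∈ s, |f x - f y| ≤ A * dist x y) : LogLipOn (A / c) f s where
  nonneg x hx := hc.le.trans (hcf x hx)
  le_exp_mul x hx y hy := by
    have hAd : 0 ≤ A * dist x y := (abs_nonneg _).trans (hA x hx y hy)
    have hfy : 0 ≤ f y := hc.le.trans (hcf y hy)
    calc f x ≤ f y + A * dist x y := by linarith [le_of_abs_le (hA x hx y hy)]
      _ = f y + A * dist x y / c * c := by rw [div_mul_cancel₀ _ hc.ne']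
      _ ≤ f y + A * dist x y / c * f y := by
          gcongr
          exact hcf y hy
      _ = (A / c * dist x y + 1) * f y := by ring
      _ ≤ Real.exp (A / c * dist x y) * f y := by
          gcongr
          exact Real.add_one_le_exp _

lemma sub_const {c ε : ℝ} (hf : LogLipOn K f s) (hK : 0 ≤ K) (hε₀ : 0 ≤ ε) (hε₁ : ε < 1)
    (hc : ∀ x ∈ s, c ≤ ε * f x) : LogLipOn (K / (1 - ε)) (fun x => f x - c) s where
  nonneg x hx := by nlinarith [hc x hx, hf.nonneg x hx]
  le_exp_mul x hx y hy := by
    have hε : 0 < 1 - ε := sub_pos.2 hε₁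
    have hKε : 0 ≤ K / (1 - ε) * dist x y := by positivity
    set P := Real.exp (K * dist x y)
    set Q := Real.exp (K / (1 - ε) * dist x y)
    have hQ : 1 ≤ Q := Real.one_le_exp hKε
    have hPQ : P ≤ (1 - ε) * Q + ε := by
      have := convexOn_exp.2 (mem_univ (K / (1 - ε) * dist x y)) (mem_univ 0) hε.le hε₀ (by ring)
      have hexp : (1 - ε) * (K / (1 - ε) * dist x y) = K * dist x y := by field_simp
      simpa only [smul_eq_mul, mul_zero, add_zero, Real.exp_zero, mul_one, hexp] using this
    calc f x - c ≤ P * f y - c := by linarith [hf.le_exp_mul x hx y hy]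
      _ ≤ ((1 - ε) * Q + ε) * f y - c := by
          gcongr
          exact hf.nonneg y hy
      _ ≤ Q * (f y - c) := by nlinarith [mul_nonneg (sub_nonneg.2 hQ) (sub_nonneg.2 (hc y hy))]

lemma continuousOn (hf : LogLipOn K f s) : ContinuousOn f s := by
  intro x hx
  have tendsto_exp_mul (C : ℝ) :
      Tendsto (fun y => Real.exp (C * dist y x) * f x) (𝓝[s] x) (𝓝 (f x)) := by
    have hcont : Continuous fun y => Real.exp (C * dist y x) * f x := by fun_prop
    simpa using (hcont.tendsto x).mono_left nhdsWithin_le_nhds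
  refine tendsto_of_tendsto_of_tendsto_of_le_of_le' (tendsto_exp_mul (-K)) (tendsto_exp_mul K)
    ?_ ?_ <;> filter_upwards [self_mem_nhdsWithin] with y hy
  · rw [neg_mul, Real.exp_neg, inv_mul_le_iff₀ (Real.exp_pos _), dist_comm]
    exact hf.le_exp_mul x hx y hy
  · exact hf.le_exp_mul y hy x hx

lemma le_exp_mul_of_dist_le {D : ℝ} (hf : LogLipOn K f s) (hK : 0 ≤ K) {x y : α} (hx : x ∈ s)
    (hy : y ∈ s) (hD : dist x y ≤ D) : f x ≤ Real.exp (K * D) * f y := by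
  refine (hf.le_exp_mul x hx y hy).trans ?_
  have hy0 := hf.nonneg y hy
  gcongr

end LogLipOn

end LogLipOn

section CutCircle

variable {p : ℝ} [Fact (0 < p)]

lemma measurePreserving_coe_equivIoc (a : ℝ) :
    MeasurePreserving (fun x : AddCircle p => (AddCircle.equivIoc p a x : ℝ)) volume
      (volume.restrict (Ioc a (a + p))) :=
  (measurePreserving_subtype_coe measurableSet_Ioc).comp (AddCircle.measurePreserving_equivIoc p)

lemma ae_of_forall_mem_Ioo {P : AddCircle p → Prop} (a : ℝ)
    (hP : ∀ t ∈ Ioo a (a + p), P (t : AddCircle p)) : ∀ᵐ x : AddCircle p, P x := by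
  have hae : ∀ᵐ t : ℝ ∂volume.restrict (Ioc a (a + p)), P (t : AddCircle p) := by
    rw [← restrict_Ioo_eq_restrict_Ioc]
    exact (ae_restrict_iff' measurableSet_Ioo).2 (Eventually.of_forall hP)
  filter_upwards [(measurePreserving_coe_equivIoc a).quasiMeasurePreserving.ae hae] with x hx
  rwa [AddCircle.coe_equivIoc] at hx

lemma integrable_of_continuousOn_Ioo {a C : ℝ} {h : AddCircle p → ℝ}
    (hcont : ContinuousOn (fun t : ℝ => h t) (Ioo a (a + p)))
    (hbound : ∀ t ∈ Ioo a (a + p), |h t| ≤ C) : Integrable h := by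
  have hmeas : AEStronglyMeasurable (fun t : ℝ => h t) (volume.restrict (Ioc a (a + p))) := by
    rw [← restrict_Ioo_eq_restrict_Ioc]
    exact hcont.aestronglyMeasurable measurableSet_Ioo
  refine Integrable.of_bound (C := C) ?_ (ae_of_forall_mem_Ioo a hbound)
  simpa only [Function.comp_def, AddCircle.coe_equivIoc] using
    hmeas.comp_measurePreserving (measurePreserving_coe_equivIoc a)

lemma integrableOn_Ioc_of_integrable (a : ℝ) {h : AddCircle p → ℝ} (hh : Integrable h) :
    IntegrableOn (fun t : ℝ => h t) (Ioc a (a + p)) :=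
  (AddCircle.measurePreserving_mk p a).integrable_comp_of_integrable hh

end CutCircle

section Circle1

lemma coe_eq_coe_iff (s t : ℝ) : (s : Circle1) = t ↔ ∃ n : ℤ, s = t + n := by
  rw [← sub_eq_zero, ← AddCircle.coe_sub, AddCircle.coe_eq_zero_iff]
  simp only [zsmul_eq_mul, mul_one, eq_comm (b := s - t), sub_eq_iff_eq_add']

lemma exists_equivIco_coe_eq (u : ℝ) :
    ∃ n : ℤ, (AddCircle.equivIco 1 0 (u : Circle1) : ℝ) = u + n :=
  ⟨-⌊u⌋, by simp [AddCircle.coe_equivIco_mk_apply, Int.fract, sub_eq_add_neg]⟩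

instance : IsProbabilityMeasure (volume : Measure Circle1) :=
  ⟨by rw [AddCircle.measure_univ, ENNReal.ofReal_one]⟩

lemma dist_le_one_of_mem_Ioo {a s t : ℝ} (hs : s ∈ Ioo a (a + 1)) (ht : t ∈ Ioo a (a + 1)) :
    dist s t ≤ 1 := by
  simpa only [add_sub_cancel_left] using
    Real.dist_le_of_mem_Icc (Ioo_subset_Icc_self hs) (Ioo_subset_Icc_self ht)

end Circle1

section CutLogLip

/-- Functions on the circle that are `K`-log-Lipschitz on `J_z` for some `z`, expressed through a
real representative `a` of `z` and the coordinate `(a, a + 1)` on `J_z`. -/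
def CutLogLip (K : ℝ) (h : Circle1 → ℝ) : Prop :=
  ∃ a : ℝ, LogLipOn K (fun t : ℝ => h t) (Ioo a (a + 1))

namespace CutLogLip

variable {K : ℝ} {h : Circle1 → ℝ}

lemma mono {K' : ℝ} (hh : CutLogLip K h) (hKK' : K ≤ K') : CutLogLip K' h :=
  hh.imp fun _ ha => ha.mono hKK'

lemma ae_nonneg (hh : CutLogLip K h) : ∀ᵐ x : Circle1, 0 ≤ h x := by
  obtain ⟨a, ha⟩ := hh
  exact ae_of_forall_mem_Ioo a ha.nonneg

lemma integrable (hh : CutLogLip K h) (hK : 0 ≤ K) : Integrable h := by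
  obtain ⟨a, ha⟩ := hh
  have hmid : a + 1 / 2 ∈ Ioo a (a + 1) := ⟨by linarith, by linarith⟩
  refine integrable_of_continuousOn_Ioo ha.continuousOn
    (C := Real.exp (K * 1) * h (a + 1 / 2 : ℝ)) fun t ht => ?_
  rw [abs_of_nonneg (ha.nonneg t ht)]
  exact ha.le_exp_mul_of_dist_le hK ht hmid (dist_le_one_of_mem_Ioo ht hmid)

lemma integral_abs (hh : CutLogLip K h) : ∫ x : Circle1, |h x| = ∫ x : Circle1, h x :=
  integral_congr_ae (hh.ae_nonneg.mono fun _ hx => abs_of_nonneg hx)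

lemma integral_le_exp_mul {a : ℝ} (hK : 0 ≤ K)
    (ha : LogLipOn K (fun t : ℝ => h t) (Ioo a (a + 1))) {t : ℝ} (ht : t ∈ Ioo a (a + 1)) :
    ∫ x : Circle1, h x ≤ Real.exp K * h t := by
  have hle : ∀ᵐ x : Circle1, h x ≤ Real.exp K * h t := ae_of_forall_mem_Ioo a fun s hs => by
    simpa only [mul_one] using
      ha.le_exp_mul_of_dist_le hK hs ht (dist_le_one_of_mem_Ioo hs ht)
  calc ∫ x : Circle1, h x ≤ ∫ _ : Circle1, Real.exp K * h t :=
        integral_mono_ae (integrable ⟨a, ha⟩ hK) (integrable_const _) hle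
    _ = Real.exp K * h t := by simp

lemma sub_const {ε : ℝ} (hh : CutLogLip K h) (hK : 0 ≤ K) (hε₀ : 0 ≤ ε) (hε₁ : ε < 1) :
    CutLogLip (K / (1 - ε)) fun x => h x - ε * Real.exp (-K) * ∫ y : Circle1, h y := by
  obtain ⟨a, ha⟩ := hh
  refine ⟨a, ha.sub_const hK hε₀ hε₁ fun t ht => ?_⟩
  rw [mul_assoc, Real.exp_neg]
  gcongr
  exact (inv_mul_le_iff₀ (Real.exp_pos K)).2 (integral_le_exp_mul hK ha ht)

end CutLogLip

end CutLogLip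

namespace CM

variable {lam Astar : ℝ} (T : CM lam Astar)

lemma lift_add_int (x : ℝ) (n : ℤ) : T.F (x + n) = T.F x + n * T.deg := by
  have hper : Function.Periodic (fun u => T.F u - u * T.deg) 1 := fun u => by
    simp only [T.lift_add_one]
    ring
  have := hper.int_mul n x
  simp only [mul_one] at this
  linarith

lemma deriv_lift_add_int (x : ℝ) (n : ℤ) : deriv T.F (x + n) = deriv T.F x := by
  rw [← deriv_comp_add_const, funext (T.lift_add_int · n), deriv_add_const]

lemma differentiable_lift : Differentiable ℝ T.F :=
  T.contDiff.differentiable two_ne_zero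

lemma differentiable_deriv_lift : Differentiable ℝ (deriv T.F) :=
  (contDiff_succ_iff_deriv (n := 1).1 T.contDiff).2.2.differentiable one_ne_zero

lemma abs_deriv_lift_sub_le (x y : ℝ) : |deriv T.F x - deriv T.F y| ≤ Astar * dist x y :=
  convex_univ.norm_image_sub_le_of_norm_deriv_le (fun u _ => T.differentiable_deriv_lift u)
    (fun u _ => T.second_bound u) (mem_univ y) (mem_univ x)

lemma mul_dist_le_dist_lift (x y : ℝ) : lam * dist x y ≤ dist (T.F x) (T.F y) := by
  wlog hxy : x ≤ y generalizing x y
  · simpa only [dist_comm] using this y x (le_of_not_ge hxy)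
  rw [dist_comm x, dist_comm (T.F x), Real.dist_eq, Real.dist_eq, abs_of_nonneg (sub_nonneg.2 hxy)]
  exact (mul_sub_le_image_sub_of_le_deriv T.differentiable_lift T.expanding hxy).trans
    (le_abs_self _)

lemma toMap_coe (u : ℝ) : T.toMap u = (T.F u : Circle1) := by
  obtain ⟨n, hn⟩ := exists_equivIco_coe_eq u
  rw [toMap, hn, lift_add_int, coe_eq_coe_iff]
  exact ⟨n * T.deg, by push_cast; rfl⟩

lemma dmap_coe (u : ℝ) : T.dmap u = deriv T.F u := by
  obtain ⟨n, hn⟩ := exists_equivIco_coe_eq u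
  rw [dmap, hn, deriv_lift_add_int]

section Inverse

variable (hlam : 0 < lam)
include hlam

lemma deriv_lift_pos (x : ℝ) : 0 < deriv T.F x :=
  hlam.trans_le (T.expanding x)

lemma strictMono_lift : StrictMono T.F :=
  strictMono_of_deriv_pos (T.deriv_lift_pos hlam)

lemma surjective_lift : Function.Surjective T.F := by
  have hgrowth := mul_sub_le_image_sub_of_le_deriv T.differentiable_lift T.expanding
  refine T.differentiable_lift.continuous.surjective ?_ ?_
  · refine tendsto_atTop_mono' _ ?_
      (tendsto_atTop_add_const_left _ (T.F 0) (tendsto_id.const_mul_atTop hlam))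
    filter_upwards [eventually_ge_atTop 0] with x hx
    linarith! [hgrowth hx]
  · refine tendsto_atBot_mono' _ ?_
      (tendsto_atBot_add_const_left _ (T.F 0) (tendsto_id.const_mul_atBot hlam))
    filter_upwards [eventually_le_atBot 0] with x hx
    linarith! [hgrowth hx]

/-- The lift of `T` as an order isomorphism of `ℝ`, used for its inverse. -/
noncomputable def liftIso : ℝ ≃o ℝ :=
  (T.strictMono_lift hlam).orderIsoOfSurjective T.F (T.surjective_lift hlam)

@[simp]
lemma lift_liftIso_symm (s : ℝ) : T.F ((T.liftIso hlam).symm s) = s :=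
  (T.liftIso hlam).apply_symm_apply s

@[simp]
lemma liftIso_symm_lift (u : ℝ) : (T.liftIso hlam).symm (T.F u) = u :=
  (T.liftIso hlam).symm_apply_apply u

lemma liftIso_symm_add_deg (s : ℝ) :
    (T.liftIso hlam).symm (s + T.deg) = (T.liftIso hlam).symm s + 1 := by
  refine (T.strictMono_lift hlam).injective ?_
  rw [T.lift_add_one, lift_liftIso_symm, lift_liftIso_symm]

lemma liftIso_symm_mem_Ico_iff {s t : ℝ} :
    (T.liftIso hlam).symm s ∈ Ico ((T.liftIso hlam).symm t) ((T.liftIso hlam).symm t + 1) ↔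
      s ∈ Ico t (t + T.deg) := by
  rw [← liftIso_symm_add_deg, mem_Ico, mem_Ico, OrderIso.le_iff_le, OrderIso.lt_iff_lt]

lemma liftIso_symm_mem_Ioo {a s : ℝ} (hs : s ∈ Ioo (T.F a) (T.F a + T.deg)) :
    (T.liftIso hlam).symm s ∈ Ioo a (a + 1) := by
  rw [← T.liftIso_symm_lift hlam a, ← liftIso_symm_add_deg]
  exact ⟨(T.liftIso hlam).symm.strictMono hs.1, (T.liftIso hlam).symm.strictMono hs.2⟩

lemma dist_liftIso_symm_le (s t : ℝ) :
    dist ((T.liftIso hlam).symm s) ((T.liftIso hlam).symm t) ≤ lam⁻¹ * dist s t := by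
  rw [le_inv_mul_iff₀ hlam]
  simpa only [lift_liftIso_symm] using
    T.mul_dist_le_dist_lift ((T.liftIso hlam).symm s) ((T.liftIso hlam).symm t)

lemma toNat_deg_cast : ((T.deg.toNat : ℤ) : ℝ) = T.deg := by
  have := T.strictMono_lift hlam (lt_add_one 0)
  rw [T.lift_add_one, lt_add_iff_pos_right, Int.cast_pos] at this
  rw [Int.toNat_of_nonneg this.le]

lemma coe_liftIso_symm_injective (t : ℝ) : Function.Injective
    fun j : Fin T.deg.toNat => ((T.liftIso hlam).symm (t + (j : ℕ)) : Circle1) := by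
  have hmem (j : Fin T.deg.toNat) : t + (j : ℕ) ∈ Ico t (t + T.deg) :=
    ⟨by simp, by
      rw [← T.toNat_deg_cast hlam]
      exact_mod_cast add_lt_add_right (Nat.cast_lt (α := ℝ).2 j.2) t⟩
  intro i j hij
  have := (AddCircle.coe_eq_coe_iff_of_mem_Ico ((T.liftIso_symm_mem_Ico_iff hlam).2 (hmem i))
    ((T.liftIso_symm_mem_Ico_iff hlam).2 (hmem j))).1 hij
  simpa [Fin.ext_iff] using this

lemma exists_coe_liftIso_symm_eq {t : ℝ} {y : Circle1} (hy : T.toMap y = t) :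
    ∃ j < T.deg.toNat, ((T.liftIso hlam).symm (t + j) : Circle1) = y := by
  obtain ⟨u, hu, rfl⟩ : y ∈ ((↑) : ℝ → Circle1) ''
      Ico ((T.liftIso hlam).symm t) ((T.liftIso hlam).symm t + 1) := by
    rw [AddCircle.coe_image_Ico_eq]
    trivial
  rw [toMap_coe, coe_eq_coe_iff] at hy
  obtain ⟨n, hn⟩ := hy
  rw [← T.liftIso_symm_lift hlam u, liftIso_symm_mem_Ico_iff, hn] at hu
  have hn0 : 0 ≤ n := by simpa using hu.1
  have hnd : n < T.deg := by simpa using hu.2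
  lift n to ℕ using hn0
  exact ⟨n, by omega, by rw [← T.liftIso_symm_lift hlam u, hn, Int.cast_natCast]⟩

/-- The points of the fibre of `T` over `t`, enumerated through the inverse of the lift. -/
noncomputable def fiberEquiv (t : ℝ) : Fin T.deg.toNat ≃ {y : Circle1 // T.toMap y = t} :=
  Equiv.ofBijective
    (fun j => ⟨((T.liftIso hlam).symm (t + (j : ℕ)) : ℝ), by
      rw [toMap_coe, lift_liftIso_symm, coe_eq_coe_iff]
      exact ⟨j, rfl⟩⟩)
    ⟨fun _ _ hij => T.coe_liftIso_symm_injective hlam t (congrArg Subtype.val hij), fun ⟨_, hy⟩ =>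
      let ⟨j, hj, hjy⟩ := T.exists_coe_liftIso_symm_eq hlam hy
      ⟨⟨j, hj⟩, Subtype.ext hjy⟩⟩

/-- The transfer operator of the lift, an invertible map of the real line. The transfer operator of
`T` sums its values over `T.deg` consecutive integer translates of a point. -/
noncomputable def liftTransfer (f : ℝ → ℝ) (s : ℝ) : ℝ :=
  f ((T.liftIso hlam).symm s) / deriv T.F ((T.liftIso hlam).symm s)

lemma transfer_coe (h : Circle1 → ℝ) (t : ℝ) :
    transfer T h t =
      ∑ j ∈ Finset.range T.deg.toNat, T.liftTransfer hlam (fun u => h u) (t + j) := by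
  rw [transfer, ← (T.fiberEquiv hlam t).tsum_eq, tsum_fintype, Finset.sum_range]
  exact Finset.sum_congr rfl fun j _ => by
    rw [liftTransfer, ← dmap_coe]
    rfl

lemma transfer_sub (h₁ h₂ : Circle1 → ℝ) :
    transfer T (fun x => h₁ x - h₂ x) = fun x => transfer T h₁ x - transfer T h₂ x := by
  funext x
  induction x using QuotientAddGroup.induction_on with
  | H t =>
    simp only [T.transfer_coe hlam, liftTransfer, sub_div, Finset.sum_sub_distrib]

lemma logLipOn_liftTransfer {K : ℝ} {f : ℝ → ℝ} {s t : Set ℝ} (hK : 0 ≤ K)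
    (hf : LogLipOn K f s) (hts : MapsTo (T.liftIso hlam).symm t s) :
    LogLipOn ((K + Astar / lam) / lam) (T.liftTransfer hlam f) t := by
  have hderiv : LogLipOn (Astar / lam) (deriv T.F) s :=
    .of_abs_sub_le hlam (fun x _ => T.expanding x) fun x _ y _ => T.abs_deriv_lift_sub_le x y
  have hA : 0 ≤ Astar := (abs_nonneg _).trans (T.second_bound 0)
  exact (hf.mul hderiv.inv).comp (by positivity) hts fun x _ y _ => T.dist_liftIso_symm_le hlam x y

lemma image_lift_Ioc (x y : ℝ) : T.F '' Ioc x y = Ioc (T.F x) (T.F y) :=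
  (T.liftIso hlam).image_Ioc x y

lemma deriv_smul_liftTransfer_lift (f : ℝ → ℝ) (u : ℝ) :
    deriv T.F u • T.liftTransfer hlam f (T.F u) = f u := by
  rw [liftTransfer, liftIso_symm_lift, smul_eq_mul, mul_div_cancel₀ _ (T.deriv_lift_pos hlam u).ne']

lemma integrableOn_liftTransfer_iff {f : ℝ → ℝ} {x y : ℝ} :
    IntegrableOn (T.liftTransfer hlam f) (Ioc (T.F x) (T.F y)) ↔ IntegrableOn f (Ioc x y) := by
  rw [← T.image_lift_Ioc hlam, integrableOn_image_iff_integrableOn_deriv_smul_of_monotoneOn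
    measurableSet_Ioc (fun u _ => (T.differentiable_lift u).hasDerivAt.hasDerivWithinAt)
    ((T.strictMono_lift hlam).monotone.monotoneOn _)]
  simp only [deriv_smul_liftTransfer_lift]

lemma setIntegral_liftTransfer (f : ℝ → ℝ) (x y : ℝ) :
    ∫ s in Ioc (T.F x) (T.F y), T.liftTransfer hlam f s = ∫ u in Ioc x y, f u := by
  rw [← T.image_lift_Ioc hlam, integral_image_eq_integral_deriv_smul_of_monotoneOn
    measurableSet_Ioc (fun u _ => (T.differentiable_lift u).hasDerivAt.hasDerivWithinAt)
    ((T.strictMono_lift hlam).monotone.monotoneOn _)]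
  simp only [deriv_smul_liftTransfer_lift]

end Inverse

end CM

section IntervalIntegral

lemma integral_sum_comp_add_natCast {φ : ℝ → ℝ} {b : ℝ} {n : ℕ}
    (hφ : IntervalIntegrable φ volume b (b + n)) :
    ∫ t in b..b + 1, ∑ j ∈ Finset.range n, φ (t + j) = ∫ s in b..b + n, φ s := by
  have hpiece (j : ℕ) (hj : j < n) :
      IntervalIntegrable φ volume (b + j) (b + (j + 1 : ℕ)) := by
    have hjn : ((j + 1 : ℕ) : ℝ) ≤ n := Nat.cast_le.2 hj
    push_cast at hjn ⊢
    refine hφ.mono_set ?_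
    rw [uIcc_of_le (by linarith), uIcc_of_le (by linarith [j.cast_nonneg (α := ℝ)])]
    exact Icc_subset_Icc (by linarith [j.cast_nonneg (α := ℝ)]) (by linarith)
  have hshift (j : ℕ) : b + 1 + j = b + (j + 1 : ℕ) := by
    push_cast
    ring
  calc ∫ t in b..b + 1, ∑ j ∈ Finset.range n, φ (t + j)
      = ∑ j ∈ Finset.range n, ∫ t in b..b + 1, φ (t + j) := by
        refine intervalIntegral.integral_finsetSum fun j hj => ?_
        simpa only [← hshift, add_sub_cancel_right] using
          (hpiece j (Finset.mem_range.1 hj)).comp_add_right j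
    _ = ∑ j ∈ Finset.range n, ∫ s in b + j..b + (j + 1 : ℕ), φ s := by
        simp only [intervalIntegral.integral_comp_add_right, hshift]
    _ = ∫ s in b..b + n, φ s := by
        rw [intervalIntegral.sum_integral_adjacent_intervals hpiece, Nat.cast_zero, add_zero]

end IntervalIntegral

section Transfer

variable {lam Astar K : ℝ} {h : Circle1 → ℝ}

lemma CutLogLip.transfer (hh : CutLogLip K h) (T : CM lam Astar) (hlam : 0 < lam) (hK : 0 ≤ K) :
    CutLogLip ((K + Astar / lam) / lam) (transfer T h) := by
  obtain ⟨a, ha⟩ := hh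
  refine ⟨T.F a, ?_⟩
  simp only [T.transfer_coe hlam]
  refine LogLipOn.sum fun j hj => ?_
  have hj : ((j : ℝ) + 1) ≤ T.deg := by
    rw [← T.toNat_deg_cast hlam]
    exact_mod_cast Finset.mem_range.1 hj
  have hbranch : LogLipOn ((K + Astar / lam) / lam) (T.liftTransfer hlam fun u => h u)
      (Ioo (T.F a) (T.F a + T.deg)) :=
    T.logLipOn_liftTransfer hlam hK ha fun s hs => T.liftIso_symm_mem_Ioo hlam hs
  have hshift : MapsTo (· + (j : ℝ)) (Ioo (T.F a) (T.F a + 1)) (Ioo (T.F a) (T.F a + T.deg)) :=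
    fun s hs => ⟨lt_add_of_lt_of_nonneg hs.1 j.cast_nonneg, by dsimp only; linarith [hs.2]⟩
  exact hbranch.comp_isometry hshift (isometry_add_right (j : ℝ))

lemma integral_transfer (hh : Integrable h) (T : CM lam Astar) (hlam : 0 < lam) :
    ∫ x : Circle1, transfer T h x = ∫ x : Circle1, h x := by
  have hF1 : T.F 0 + T.deg.toNat = T.F 1 := by
    rw [← Int.cast_natCast, T.toNat_deg_cast hlam, ← T.lift_add_one, zero_add]
  have hle : T.F 0 ≤ T.F 1 := (T.strictMono_lift hlam).monotone zero_le_one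
  have hint : IntegrableOn (fun t : ℝ => h t) (Ioc 0 1) := by
    simpa only [zero_add] using integrableOn_Ioc_of_integrable 0 hh
  have hint_lift : IntervalIntegrable (T.liftTransfer hlam fun u => h u) volume
      (T.F 0) (T.F 0 + T.deg.toNat) := by
    rw [hF1, intervalIntegrable_iff_integrableOn_Ioc_of_le hle]
    exact (T.integrableOn_liftTransfer_iff hlam).2 hint
  calc ∫ x : Circle1, transfer T h x
      = ∫ t in T.F 0..T.F 0 + 1,
          ∑ j ∈ Finset.range T.deg.toNat, T.liftTransfer hlam (fun u => h u) (t + j) := by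
        simp only [← AddCircle.intervalIntegral_preimage 1 (T.F 0), T.transfer_coe hlam]
    _ = ∫ s in T.F 0..T.F 1, T.liftTransfer hlam (fun u => h u) s := by
        rw [integral_sum_comp_add_natCast hint_lift, hF1]
    _ = ∫ u in Ioc (0 : ℝ) 1, h u := by
        rw [intervalIntegral.integral_of_le hle, T.setIntegral_liftTransfer hlam]
    _ = ∫ x : Circle1, h x := by
        simpa only [zero_add] using AddCircle.integral_preimage 1 0 h

end Transfer

section LogLipDiff

/-- Differences of two `K`-log-Lipschitz functions of the same integral `m`. -/
def LogLipDiff (K m : ℝ) (g : Circle1 → ℝ) : Prop :=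
  ∃ f₁ f₂ : Circle1 → ℝ, CutLogLip K f₁ ∧ CutLogLip K f₂ ∧
    ∫ x : Circle1, f₁ x = m ∧ ∫ x : Circle1, f₂ x = m ∧ g = fun x => f₁ x - f₂ x

namespace LogLipDiff

variable {lam Astar K ε m : ℝ} {g : Circle1 → ℝ}

lemma l1norm_le (hg : LogLipDiff K m g) (hK : 0 ≤ K) : l1norm g ≤ 2 * m := by
  obtain ⟨f₁, f₂, h₁, h₂, hm₁, hm₂, rfl⟩ := hg
  have hi₁ := (h₁.integrable hK).abs
  have hi₂ := (h₂.integrable hK).abs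
  calc l1norm (fun x => f₁ x - f₂ x) ≤ ∫ x : Circle1, (|f₁ x| + |f₂ x|) :=
        integral_mono ((h₁.integrable hK).sub (h₂.integrable hK)).abs (hi₁.add hi₂)
          fun x => abs_sub _ _
    _ = 2 * m := by
        rw [integral_add hi₁ hi₂, h₁.integral_abs, h₂.integral_abs, hm₁, hm₂, two_mul]

lemma transfer (hg : LogLipDiff K m g) (T : CM lam Astar) (hlam : 0 < lam) (hK : 0 ≤ K)
    (hε₀ : 0 ≤ ε) (hε₁ : ε < 1) (hcone : (K / (1 - ε) + Astar / lam) / lam ≤ K) :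
    LogLipDiff K ((1 - ε * Real.exp (-K)) * m) (transfer T g) := by
  have hKε : 0 ≤ K / (1 - ε) := div_nonneg hK (sub_nonneg.2 hε₁.le)
  have transfer_sub_const {f : Circle1 → ℝ} (hf : CutLogLip K f) (hm : ∫ x : Circle1, f x = m) :
      CutLogLip K (_root_.transfer T fun x => f x - ε * Real.exp (-K) * m) ∧
        ∫ x : Circle1, _root_.transfer T (fun x => f x - ε * Real.exp (-K) * m) x =
          (1 - ε * Real.exp (-K)) * m := by
    have hsub : CutLogLip (K / (1 - ε)) fun x => f x - ε * Real.exp (-K) * m :=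
      hm ▸ hf.sub_const hK hε₀ hε₁
    refine ⟨(hsub.transfer T hlam hKε).mono hcone, ?_⟩
    rw [integral_transfer (hsub.integrable hKε) T hlam,
      integral_sub (hf.integrable hK) (integrable_const _), hm, integral_const, probReal_univ,
      one_smul]
    ring
  obtain ⟨f₁, f₂, h₁, h₂, hm₁, hm₂, rfl⟩ := hg
  obtain ⟨hc₁, hi₁⟩ := transfer_sub_const h₁ hm₁
  obtain ⟨hc₂, hi₂⟩ := transfer_sub_const h₂ hm₂
  refine ⟨_, _, hc₁, hc₂, hi₁, hi₂, ?_⟩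
  rw [← T.transfer_sub hlam]
  simp only [sub_sub_sub_cancel_right]

lemma transferIter (hg : LogLipDiff K m g) (Ts : ℕ → CM lam Astar) (hlam : 0 < lam) (hK : 0 ≤ K)
    (hε₀ : 0 ≤ ε) (hε₁ : ε < 1) (hcone : (K / (1 - ε) + Astar / lam) / lam ≤ K) (k : ℕ) :
    LogLipDiff K ((1 - ε * Real.exp (-K)) ^ k * m) (transferIter Ts k g) := by
  induction k with
  | zero => simpa only [pow_zero, one_mul, _root_.transferIter] using hg
  | succ k ih =>
    rw [pow_succ', mul_assoc]
    exact ih.transfer (Ts (k + 1)) hlam hK hε₀ hε₁ hcone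

end LogLipDiff

lemma exists_cone_parameters {lam Astar : ℝ} (hlam : 1 < lam) (hA : 0 < Astar) :
    ∃ K ε : ℝ, 0 < K ∧ 0 < ε ∧ ε < 1 ∧ (K / (1 - ε) + Astar / lam) / lam ≤ K := by
  have hlam₁ : 0 < lam - 1 := sub_pos.2 hlam
  refine ⟨2 * Astar / (lam * (lam - 1)), (lam - 1) / (lam + 1), by positivity, by positivity, ?_,
    le_of_eq ?_⟩
  · rw [div_lt_one (by positivity)]
    linarith
  · have hε : 1 - (lam - 1) / (lam + 1) = 2 / (lam + 1) := by
      field_simp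
      ring
    rw [hε]
    field_simp
    ring

end LogLipDiff

section LipOnArc

variable {z : Circle1} {L K : ℝ} {g : Circle1 → ℝ}

lemma coe_zrep (z : Circle1) : (zrep z : Circle1) = z :=
  AddCircle.coe_equivIco

lemma coe_ne_of_mem_Ioo {t : ℝ} (ht : t ∈ Ioo (zrep z) (zrep z + 1)) : (t : Circle1) ≠ z := by
  intro h
  rw [← coe_zrep z, AddCircle.coe_eq_coe_iff_of_mem_Ico (Ioo_subset_Ico_self ht)
    (left_mem_Ico.2 (lt_add_one _))] at h
  exact ht.1.ne' h

lemma arcCoord_coe {t : ℝ} (ht : t ∈ Ioo (zrep z) (zrep z + 1)) : arcCoord z t = t := by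
  rw [arcCoord, AddCircle.equivIoc_coe_of_mem (Ioo_subset_Ioc_self ht)]

namespace LipOnArc

lemma abs_sub_le (hg : LipOnArc z L g) {s t : ℝ} (hs : s ∈ Ioo (zrep z) (zrep z + 1))
    (ht : t ∈ Ioo (zrep z) (zrep z + 1)) : |g s - g t| ≤ L * dist s t := by
  simpa only [arcDist, arcCoord_coe hs, arcCoord_coe ht, ← Real.dist_eq] using
    hg s t (coe_ne_of_mem_Ioo hs) (coe_ne_of_mem_Ioo ht)

lemma abs_sub_le_of_nonneg (hg : LipOnArc z L g) (hL : 0 ≤ L) {s t : ℝ}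
    (hs : s ∈ Ioo (zrep z) (zrep z + 1)) (ht : t ∈ Ioo (zrep z) (zrep z + 1)) :
    |g s - g t| ≤ L :=
  (hg.abs_sub_le hs ht).trans (mul_le_of_le_one_right hL (dist_le_one_of_mem_Ioo hs ht))

lemma integrable (hg : LipOnArc z L g) (hL : 0 ≤ L) : Integrable g := by
  have hlip : LipschitzOnWith L.toNNReal (fun t : ℝ => g t) (Ioo (zrep z) (zrep z + 1)) :=
    .of_dist_le_mul fun s hs t ht => by
      simpa only [Real.coe_toNNReal L hL, Real.dist_eq (g s)] using hg.abs_sub_le hs ht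
  obtain ⟨c, hc⟩ : (Ioo (zrep z) (zrep z + 1)).Nonempty := nonempty_Ioo.2 (lt_add_one _)
  refine integrable_of_continuousOn_Ioo hlip.continuousOn (C := L + |g c|) fun t ht => ?_
  linarith [abs_sub_abs_le_abs_sub (g t) (g c), hg.abs_sub_le_of_nonneg hL ht hc]

lemma abs_le_of_integral_eq_zero (hg : LipOnArc z L g) (hL : 0 ≤ L)
    (hmean : ∫ x : Circle1, g x = 0) {t : ℝ} (ht : t ∈ Ioo (zrep z) (zrep z + 1)) :
    |g t| ≤ L := by
  have hle : ∀ᵐ x : Circle1, ‖g t - g x‖ ≤ L :=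
    ae_of_forall_mem_Ioo (zrep z) fun s hs => hg.abs_sub_le_of_nonneg hL ht hs
  have hgt : ∫ x : Circle1, (g t - g x) = g t := by
    rw [integral_sub (integrable_const _) (hg.integrable hL), hmean, integral_const, probReal_univ,
      one_smul, sub_zero]
  simpa only [hgt, Real.norm_eq_abs, probReal_univ, mul_one] using
    norm_integral_le_of_norm_le_const hle

lemma logLipDiff (hg : LipOnArc z L g) (hL : 0 < L) (hK : 0 < K)
    (hmean : ∫ x : Circle1, g x = 0) : LogLipDiff K (L + L / K) g := by
  set m := L + L / K
  have hLK : 0 < L / K := by positivity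
  have hlower (t : ℝ) (ht : t ∈ Ioo (zrep z) (zrep z + 1)) : L / K ≤ g t + m := by
    linarith [neg_le_of_abs_le (hg.abs_le_of_integral_eq_zero hL.le hmean ht)]
  have hcut : LogLipOn K (fun t : ℝ => g t + m) (Ioo (zrep z) (zrep z + 1)) := by
    have hLLK : L / (L / K) = K := by field_simp
    rw [← hLLK]
    exact .of_abs_sub_le hLK hlower fun s hs t ht => by
      simpa only [add_sub_add_right_eq_sub] using hg.abs_sub_le hs ht
  refine ⟨fun x => g x + m, fun _ => m, ⟨zrep z, hcut⟩, ⟨zrep z, .const hK.le (by positivity)⟩,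
    ?_, ?_, ?_⟩
  · rw [integral_add (hg.integrable hL.le) (integrable_const _), hmean, integral_const,
      probReal_univ, one_smul, zero_add]
  · rw [integral_const, probReal_univ, one_smul]
  · simp only [add_sub_cancel_right]

end LipOnArc

end LipOnArc

/-- Corollary `cor:memory_bounds`.  There is `ϑ ∈ (0,1)` (depending only on
`λ, A*`) such that for every `L > 0` there is `C > 0` (depending only on `L, λ, A*`) with
`‖ℒ_k⋯ℒ_1 g‖_{L¹(𝔪)} ≤ Cϑᵏ` whenever `g` is Lipschitz on `J_z` with constant `L` and has
zero mean. -/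
theorem statement5 {lam Astar : ℝ} (hlam : 1 < lam) (hA : 0 < Astar) :
    ∃ θ : ℝ, θ ∈ Set.Ioo (0 : ℝ) 1 ∧
      ∀ L : ℝ, 0 < L → ∃ C : ℝ, 0 < C ∧
        ∀ (z : Circle1) (g : Circle1 → ℝ), LipOnArc z L g → (∫ x : Circle1, g x) = 0 →
          ∀ (Ts : ℕ → CM lam Astar) (k : ℕ),
            l1norm (transferIter Ts k g) ≤ C * θ ^ k := by
  obtain ⟨K, ε, hK, hε₀, hε₁, hcone⟩ := exists_cone_parameters hlam hA
  have hlam₀ : 0 < lam := zero_lt_one.trans hlam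
  have hloss : ε * Real.exp (-K) < 1 :=
    mul_lt_one_of_nonneg_of_lt_one_left hε₀.le hε₁ (Real.exp_le_one_iff.2 (neg_nonpos.2 hK.le))
  refine ⟨1 - ε * Real.exp (-K), ⟨sub_pos.2 hloss, sub_lt_self 1 (by positivity)⟩,
    fun L hL => ⟨2 * (L + L / K), by positivity, fun z g hg hmean Ts k => ?_⟩⟩
  have hk := (hg.logLipDiff hL hK hmean).transferIter Ts hlam₀ hK.le hε₀.le hε₁ hcone k
  exact (hk.l1norm_le hK.le).trans_eq (by ring)
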